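/- arXiv:1304.2244 — 3 statements merged into one kernel-verified Lean document; each statement's English description precedes it below -/
import Mathlib

section
/- Fix n ≥ 1 and consider the auction with n items and n unit-demand agents, where agent i's valuation is v_i(S) = 1/i for every nonempty S ⊆ M and v_i(∅) = 0. Then every Combinatorial Walrasian Equilibrium of this auction has revenue at most 1, while the optimal social welfare equals Σ_{i=1}^n 1/i. Hence no CWE extracts revenue exceeding a 1/(Σ_{i=1}^n 1/i) ≈ 1/ln(n) fraction of the optimal social welfare. -/
open Finset

/-- A valuation is nonnegative, monotone, and normalized. -/
def ValidVal {ι : Type} [Fintype ι] [DecidableEq ι] (v : Finset ι → ℝ) : Prop :=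
  (∀ S, 0 ≤ v S) ∧ (∀ S T : Finset ι, S ⊆ T → v S ≤ v T) ∧ v ∅ = 0

/-- The agents' bundles are pairwise disjoint (the unallocated bundle `X₀` is the complement). -/
def IsAlloc {ι : Type} [Fintype ι] [DecidableEq ι] {n : ℕ} (X : Fin n → Finset ι) : Prop :=
  ∀ i j, i ≠ j → Disjoint (X i) (X j)

/-- The unallocated bundle `X₀` of an allocation. -/
def unalloc {ι : Type} [Fintype ι] [DecidableEq ι] {n : ℕ} (X : Fin n → Finset ι) : Finset ι :=
  Finset.univ \ Finset.univ.sup X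

/-- `Γ(X)`: the nonempty bundles among `X₀, X₁, …, Xₙ`. -/
def Bundles {ι : Type} [Fintype ι] [DecidableEq ι] {n : ℕ} (X : Fin n → Finset ι) :
    Finset (Finset ι) :=
  (insert (unalloc X) (Finset.image X Finset.univ)).erase ∅

/-- Quasilinear utility of a set `S` of bundles under bundle prices `p`. -/
def util {ι : Type} [Fintype ι] [DecidableEq ι] (v : Finset ι → ℝ) (p : Finset ι → ℝ)
    (S : Finset (Finset ι)) : ℝ :=
  v (S.sup id) - ∑ B ∈ S, p B

/-- The set of bundles assigned to agent `i`: `{Xᵢ}` if nonempty, else `∅`. -/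
def own {ι : Type} [Fintype ι] [DecidableEq ι] {n : ℕ} (X : Fin n → Finset ι) (i : Fin n) :
    Finset (Finset ι) :=
  if X i = ∅ then ∅ else {X i}

/-- Combinatorial Walrasian Equilibrium: an allocation together with nonnegative prices on the
bundles of `Γ(X)` such that each agent's own assignment maximizes his quasilinear utility
over all sets of bundles `S ⊆ Γ(X)`. -/
def IsCWE {ι : Type} [Fintype ι] [DecidableEq ι] {n : ℕ} (v : Fin n → Finset ι → ℝ)
    (X : Fin n → Finset ι) (p : Finset ι → ℝ) : Prop :=
  IsAlloc X ∧ (∀ B ∈ Bundles X, 0 ≤ p B) ∧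
    ∀ i : Fin n, ∀ S ⊆ Bundles X, util (v i) p S ≤ util (v i) p (own X i)

/-- Social welfare of an allocation. -/
def SW {ι : Type} [Fintype ι] [DecidableEq ι] {n : ℕ} (v : Fin n → Finset ι → ℝ)
    (X : Fin n → Finset ι) : ℝ :=
  ∑ i, v i (X i)

/-- Revenue of a priced allocation: the sum of prices of the allocated bundles. -/
def Revenue {ι : Type} [Fintype ι] [DecidableEq ι] {n : ℕ} (X : Fin n → Finset ι)
    (p : Finset ι → ℝ) : ℝ :=
  ∑ i ∈ Finset.univ.filter (fun i => X i ≠ ∅), p (X i)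

/-! In a CWE no winner prefers another winner's bundle to his own, so agents who value all
nonempty sets alike pay a common price. If `i` is the last winner (counting from `1`), this price
is at most his value `w i`, and there are at most `i` winners, so the revenue is at most `i * w i`.
For `w i = 1 / i` this is `1`, whereas giving each agent an item of his own yields welfare
`∑ 1 / i`. -/

theorem card_filter_le_of_forall_le {n : ℕ} {P : Fin n → Prop} [DecidablePred P] {i : Fin n}
    (hP : ∀ j, P j → j ≤ i) : #{j | P j} ≤ (i : ℕ) + 1 := by
  rw [← Fin.card_Iic i]
  exact card_le_card fun j hj => mem_Iic.2 (hP j (mem_filter_univ j |>.1 hj))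

section Equilibrium

variable {ι : Type} [Fintype ι] [DecidableEq ι] {n : ℕ}
  {v : Fin n → Finset ι → ℝ} {X : Fin n → Finset ι} {p : Finset ι → ℝ} {i j : Fin n}

theorem apply_mem_bundles (hi : X i ≠ ∅) : X i ∈ Bundles X :=
  mem_erase.2 ⟨hi, mem_insert_of_mem (mem_image_of_mem X (mem_univ i))⟩

theorem util_empty (u p : Finset ι → ℝ) : util u p ∅ = u ∅ := by
  simp [util]

theorem util_singleton (u p : Finset ι → ℝ) (B : Finset ι) : util u p {B} = u B - p B := by
  simp [util]

theorem util_own (u p : Finset ι → ℝ) (hi : X i ≠ ∅) : util u p (own X i) = u (X i) - p (X i) := by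
  rw [own, if_neg hi, util_singleton]

namespace IsCWE

theorem price_le_val_sub_val_empty (h : IsCWE v X p) (hi : X i ≠ ∅) :
    p (X i) ≤ v i (X i) - v i ∅ := by
  have rational : util (v i) p ∅ ≤ util (v i) p (own X i) := h.2.2 i ∅ (empty_subset _)
  rw [util_empty, util_own _ _ hi] at rational
  linarith

theorem val_sub_price_le (h : IsCWE v X p) (hi : X i ≠ ∅) (hj : X j ≠ ∅) :
    v j (X i) - p (X i) ≤ v j (X j) - p (X j) := by
  have envyFree : util (v j) p {X i} ≤ util (v j) p (own X j) :=
    h.2.2 j {X i} (singleton_subset_iff.2 (apply_mem_bundles hi))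
  rwa [util_singleton, util_own _ _ hj] at envyFree

end IsCWE

end Equilibrium

section UnitDemand

variable {ι : Type} [DecidableEq ι]

/-- The unit-demand valuation over interchangeable items: every nonempty set is worth `c`. -/
def unitVal (c : ℝ) (S : Finset ι) : ℝ :=
  if S = ∅ then 0 else c

theorem unitVal_empty (c : ℝ) : unitVal c (∅ : Finset ι) = 0 :=
  if_pos rfl

theorem unitVal_of_ne_empty (c : ℝ) {S : Finset ι} (hS : S ≠ ∅) : unitVal c S = c :=
  if_neg hS

theorem unitVal_le {c : ℝ} (hc : 0 ≤ c) (S : Finset ι) : unitVal c S ≤ c := by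
  unfold unitVal
  split_ifs
  exacts [hc, le_rfl]

variable [Fintype ι] {n : ℕ} {w : Fin n → ℝ} {X : Fin n → Finset ι} {p : Finset ι → ℝ}
  {i j : Fin n}

namespace IsCWE

theorem price_le_of_unitVal (h : IsCWE (fun i => unitVal (w i)) X p) (hi : X i ≠ ∅) :
    p (X i) ≤ w i := by
  simpa only [unitVal_of_ne_empty _ hi, unitVal_empty, sub_zero] using
    h.price_le_val_sub_val_empty hi

theorem price_le_price_of_unitVal (h : IsCWE (fun i => unitVal (w i)) X p)
    (hi : X i ≠ ∅) (hj : X j ≠ ∅) : p (X j) ≤ p (X i) := by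
  simpa only [unitVal_of_ne_empty _ hi, unitVal_of_ne_empty _ hj, sub_le_sub_iff_left] using
    h.val_sub_price_le hi hj

theorem revenue_le_of_last_winner (h : IsCWE (fun i => unitVal (w i)) X p)
    (hi : X i ≠ ∅) (hlast : ∀ j, X j ≠ ∅ → j ≤ i) : Revenue X p ≤ ((i : ℕ) + 1) * w i := by
  have card_le : (#{j | X j ≠ ∅} : ℝ) ≤ (i : ℕ) + 1 := mod_cast card_filter_le_of_forall_le hlast
  have price_nonneg : 0 ≤ p (X i) := h.2.1 _ (apply_mem_bundles hi)
  calc Revenue X p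
      ≤ #{j | X j ≠ ∅} • p (X i) := sum_le_card_nsmul _ _ _ fun j hj =>
        h.price_le_price_of_unitVal hi (mem_filter_univ j |>.1 hj)
    _ = #{j | X j ≠ ∅} * p (X i) := nsmul_eq_mul _ _
    _ ≤ ((i : ℕ) + 1) * p (X i) := mul_le_mul_of_nonneg_right card_le price_nonneg
    _ ≤ ((i : ℕ) + 1) * w i := by gcongr; exact h.price_le_of_unitVal hi

theorem revenue_le_of_unitVal {R : ℝ} (h : IsCWE (fun i => unitVal (w i)) X p)
    (hR : 0 ≤ R) (hw : ∀ i : Fin n, ((i : ℕ) + 1) * w i ≤ R) : Revenue X p ≤ R := by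
  obtain noWinner | someWinner := (univ.filter fun i => X i ≠ ∅).eq_empty_or_nonempty
  · rwa [Revenue, noWinner, sum_empty]
  · obtain ⟨i, hi, hlast⟩ := exists_max_image _ id someWinner
    simp only [mem_filter_univ, id] at hi hlast
    exact (h.revenue_le_of_last_winner hi hlast).trans (hw i)

end IsCWE

theorem sw_unitVal_le (hw : ∀ i, 0 ≤ w i) (X : Fin n → Finset ι) :
    SW (fun i => unitVal (w i)) X ≤ ∑ i, w i :=
  sum_le_sum fun i _ => unitVal_le (hw i) (X i)

theorem sw_unitVal_of_ne_empty (hX : ∀ i, X i ≠ ∅) : SW (fun i => unitVal (w i)) X = ∑ i, w i :=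
  sum_congr rfl fun i _ => unitVal_of_ne_empty (w i) (hX i)

theorem isAlloc_singleton (e : Fin n ↪ ι) : IsAlloc fun i => {e i} :=
  fun _ _ hij => disjoint_singleton.2 (e.injective.ne hij)

theorem isGreatest_sw_unitVal (hn : n ≤ Fintype.card ι) (hw : ∀ i, 0 ≤ w i) :
    IsGreatest {s : ℝ | ∃ Z : Fin n → Finset ι, IsAlloc Z ∧ SW (fun i => unitVal (w i)) Z = s}
      (∑ i, w i) := by
  obtain ⟨e⟩ : Nonempty (Fin n ↪ ι) :=
    Function.Embedding.nonempty_of_card_le (by rwa [Fintype.card_fin])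
  constructor
  · exact ⟨_, isAlloc_singleton e, sw_unitVal_of_ne_empty fun i => singleton_ne_empty (e i)⟩
  · rintro _ ⟨Z, -, rfl⟩
    exact sw_unitVal_le hw Z

theorem cwe_revenue_log_separation_general {R : ℝ} (hn : n ≤ Fintype.card ι)
    (hw : ∀ i, 0 ≤ w i) (hR : 0 ≤ R) (hwR : ∀ i : Fin n, ((i : ℕ) + 1) * w i ≤ R) :
    (∀ (X : Fin n → Finset ι) (p : Finset ι → ℝ),
        IsCWE (fun i => unitVal (w i)) X p → Revenue X p ≤ R) ∧
      IsGreatest {s : ℝ | ∃ Z : Fin n → Finset ι, IsAlloc Z ∧ SW (fun i => unitVal (w i)) Z = s}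
        (∑ i, w i) :=
  ⟨fun _ _ h => h.revenue_le_of_unitVal hR hwR, isGreatest_sw_unitVal hn hw⟩

end UnitDemand

/-- in the market with `n` items and `n` unit-demand agents where agent `i`
values any nonempty set at `1/i` (`i = 1, …, n`), every CWE has revenue at most `1`, while the
optimal social welfare equals `∑_{i=1}^n 1/i`. -/
theorem cwe_revenue_log_separation (n : ℕ) (hn : 1 ≤ n)
    (v : Fin n → Finset (Fin n) → ℝ)
    (hv : ∀ (i : Fin n) (S : Finset (Fin n)),
      v i S = if S = ∅ then 0 else 1 / (((i : ℕ) : ℝ) + 1)) :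
    (∀ (X : Fin n → Finset (Fin n)) (p : Finset (Fin n) → ℝ),
        IsCWE v X p → Revenue X p ≤ 1) ∧
      IsGreatest {w : ℝ | ∃ Z : Fin n → Finset (Fin n), IsAlloc Z ∧ SW v Z = w}
        (∑ i : Fin n, 1 / (((i : ℕ) : ℝ) + 1)) := by
  obtain rfl : v = fun i : Fin n => unitVal (1 / (((i : ℕ) : ℝ) + 1)) :=
    funext₂ hv
  exact cwe_revenue_log_separation_general (Fintype.card_fin n).ge (fun _ => by positivity)
    zero_le_one fun i => (mul_one_div_cancel (Nat.cast_add_one_ne_zero (i : ℕ))).le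
end

section
/- Let X = (X_0, X_1, …, X_n) be an allocation with nonnegative bundle prices p(X_i) for the nonempty bundles, let k ≥ 1 be the number of agents with X_i ≠ ∅ and SW_0 = Σ_{i=1}^n v_i(X_i) > 0. For t ≥ 1 set σ_t = 2^{t−1}·SW_0/(2k), W_t = {i : X_i ≠ ∅ and v_i(X_i) ≥ p(X_i) + σ_t}, SW_t = Σ_{i∈W_t} v_i(X_i), and REV_t = Σ_{i∈W_t} (p(X_i) + σ_t). Then for every t ≥ 1, SW_t − SW_{t+1} ≤ 2·REV_t. -/
open Finset

/-!
An agent who drops out between rounds `t` and `t + 1` has value below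
`p(Xᵢ) + σ_{t+1} = p(Xᵢ) + 2σ_t ≤ 2(p(Xᵢ) + σ_t)`, that is, below twice what he contributes to
`REV_t`; the agents who stay contribute nonnegatively to `REV_t`.
-/

theorem sum_sub_sum_le_sum_of_subset {α G : Type*} [AddCommGroup G] [PartialOrder G]
    [IsOrderedAddMonoid G] {s t : Finset α} {f g : α → G} (hst : s ⊆ t)
    (hfg : ∀ i ∈ t, i ∉ s → f i ≤ g i) (hg : ∀ i ∈ s, 0 ≤ g i) :
    ∑ i ∈ t, f i - ∑ i ∈ s, f i ≤ ∑ i ∈ t, g i := by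
  classical
  calc ∑ i ∈ t, f i - ∑ i ∈ s, f i
      = ∑ i ∈ t \ s, f i := (sum_sdiff_eq_sub hst).symm
    _ ≤ ∑ i ∈ t \ s, g i :=
      sum_le_sum fun i hi => hfg i (mem_sdiff.mp hi).1 (mem_sdiff.mp hi).2
    _ ≤ ∑ i ∈ t \ s, g i + ∑ i ∈ s, g i := le_add_of_nonneg_right (sum_nonneg hg)
    _ = ∑ i ∈ t, g i := sum_sdiff hst

section Threshold

variable {α R : Type*} [CommRing R] [LinearOrder R] [IsStrictOrderedRing R]
  {s : Finset α} {value price : α → R}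

theorem sum_filter_price_add_le_sub_sum_filter_price_add_two_mul_le
    (hprice : ∀ i ∈ s, 0 ≤ price i) {x : R} (hx : 0 ≤ x) :
    (∑ i ∈ s with price i + x ≤ value i, value i)
        - (∑ i ∈ s with price i + 2 * x ≤ value i, value i)
      ≤ 2 * ∑ i ∈ s with price i + x ≤ value i, (price i + x) := by
  rw [mul_sum]
  apply sum_sub_sum_le_sum_of_subset
  · exact monotone_filter_right s fun i _ hi => by linarith
  · intro i hi hi_dropped
    have hi_mem : i ∈ s := (mem_filter.mp hi).1
    have hvalue : value i < price i + 2 * x :=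
      lt_of_not_ge fun h => hi_dropped (mem_filter.mpr ⟨hi_mem, h⟩)
    linarith [hprice i hi_mem]
  · intro i hi
    linarith [hprice i (mem_filter.mp hi).1]

theorem welfare_drop_bounded_by_revenue_general (hprice : ∀ i ∈ s, 0 ≤ price i)
    {c : R} (hc : 0 ≤ c) {σ : ℕ → R} (hσ : ∀ t, σ t = 2 ^ (t - 1) * c)
    {W : ℕ → Finset α} (hW : ∀ t, W t = {i ∈ s | price i + σ t ≤ value i})
    {t : ℕ} (ht : 1 ≤ t) :
    (∑ i ∈ W t, value i) - (∑ i ∈ W (t + 1), value i) ≤ 2 * ∑ i ∈ W t, (price i + σ t) := by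
  have hσ_nonneg : 0 ≤ σ t := by rw [hσ]; positivity
  have hσ_succ : σ (t + 1) = 2 * σ t := by
    rw [hσ, hσ, Nat.add_sub_cancel, ← mul_assoc, mul_pow_sub_one (Nat.one_le_iff_ne_zero.mp ht)]
  rw [hW (t + 1), hσ_succ, hW t]
  exact sum_filter_price_add_le_sub_sum_filter_price_add_two_mul_le hprice hσ_nonneg

end Threshold

/-- with `σ_t = 2^(t−1)·SW₀/(2k)`, `W_t = {i : Xᵢ ≠ ∅ and vᵢ(Xᵢ) ≥ p(Xᵢ) + σ_t}`,
`SW_t = ∑_{i∈W_t} vᵢ(Xᵢ)` and `REV_t = ∑_{i∈W_t} (p(Xᵢ) + σ_t)`, for every `t ≥ 1` one has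
`SW_t − SW_{t+1} ≤ 2·REV_t`. -/
theorem welfare_drop_bounded_by_revenue {ι : Type} [Fintype ι] [DecidableEq ι] (n : ℕ)
    (v : Fin n → Finset ι → ℝ) (hv : ∀ i, ValidVal (v i))
    (X : Fin n → Finset ι) (hX : IsAlloc X)
    (p : Finset ι → ℝ) (hp : ∀ i : Fin n, X i ≠ ∅ → 0 ≤ p (X i))
    (k : ℕ) (hk : k = (Finset.univ.filter (fun i : Fin n => X i ≠ ∅)).card) (hk1 : 1 ≤ k)
    (hSW : 0 < SW v X)
    (σ : ℕ → ℝ) (hσ : ∀ t : ℕ, σ t = 2 ^ (t - 1) * SW v X / (2 * k))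
    (W : ℕ → Finset (Fin n))
    (hW : ∀ t : ℕ, W t =
      Finset.univ.filter (fun i : Fin n => X i ≠ ∅ ∧ p (X i) + σ t ≤ v i (X i))) :
    ∀ t : ℕ, 1 ≤ t →
      (∑ i ∈ W t, v i (X i)) - (∑ i ∈ W (t + 1), v i (X i))
        ≤ 2 * ∑ i ∈ W t, (p (X i) + σ t) := fun _ ht =>
  welfare_drop_bounded_by_revenue_general (s := {i | X i ≠ ∅}) (price := fun i => p (X i))
    (fun i hi => hp i (mem_filter.mp hi).2) (c := SW v X / (2 * k)) (by positivity)
    (fun t => by rw [hσ, mul_div_assoc]) (fun t => by rw [hW, filter_filter]) ht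
end

section
/- Let (X, p) be a Combinatorial Walrasian Equilibrium. Then the allocation of the sold bundles is socially efficient among reallocations of those bundles: for every assignment of pairwise disjoint sets Z_1, …, Z_n, where each Z_i is a union of some of the allocated bundles {X_j : j ≥ 1, X_j ≠ ∅} and no allocated bundle is used by two agents, it holds that Σ_{i=1}^n v_i(Z_i) ≤ Σ_{i=1}^n v_i(X_i). -/
open Finset

/-!
At a common price system every agent weakly prefers her own assignment to the bundles proposed to
her; summing these inequalities, the total utility cannot rise. A reallocation uses each sold bundle
at most once, so its total price is at most the revenue, which is exactly what the agents pay in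
equilibrium. Adding the prices back to the utilities bounds the welfare.
-/

theorem sum_sum_le_sum_of_pairwiseDisjoint {α β M : Type*} [AddCommMonoid M] [PartialOrder M]
    [IsOrderedAddMonoid M] {s : Finset α} {t : Finset β} {Z : α → Finset β} {f : β → M}
    (hf : ∀ b ∈ t, 0 ≤ f b) (hsub : ∀ i ∈ s, Z i ⊆ t)
    (hdisj : (s : Set α).PairwiseDisjoint Z) :
    ∑ i ∈ s, ∑ b ∈ Z i, f b ≤ ∑ b ∈ t, f b := by
  classical
  rw [← sum_biUnion hdisj]
  exact sum_le_sum_of_subset_of_nonneg (biUnion_subset.2 hsub) fun b hb _ => hf b hb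

/-- The sold bundles `{Xⱼ : j ≥ 1, Xⱼ ≠ ∅}`, that is, `Γ(X)` without the unallocated bundle. -/
def soldBundles {ι : Type} [DecidableEq ι] {n : ℕ} (X : Fin n → Finset ι) : Finset (Finset ι) :=
  (image X univ).erase ∅

theorem soldBundles_eq_image_filter {ι : Type} [DecidableEq ι] {n : ℕ} (X : Fin n → Finset ι) :
    soldBundles X = (univ.filter fun i => X i ≠ ∅).image X := by
  rw [soldBundles, ← filter_ne', filter_image]

section

variable {ι : Type} [Fintype ι] [DecidableEq ι] {n : ℕ} {v : Fin n → Finset ι → ℝ}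
  {X : Fin n → Finset ι} {p : Finset ι → ℝ}

theorem soldBundles_subset_bundles (X : Fin n → Finset ι) : soldBundles X ⊆ Bundles X :=
  erase_subset_erase _ (subset_insert _ _)

theorem IsAlloc.injOn_nonempty (hX : IsAlloc X) : Set.InjOn X {i | X i ≠ ∅} := by
  intro i hi j _ hij
  by_contra hne
  have hdisj : Disjoint (X i) (X i) := by simpa only [← hij] using hX i j hne
  exact hi (disjoint_self.1 hdisj)

theorem IsAlloc.sum_price_soldBundles (hX : IsAlloc X) (p : Finset ι → ℝ) :
    ∑ B ∈ soldBundles X, p B = Revenue X p := by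
  rw [soldBundles_eq_image_filter, Revenue, sum_image]
  simpa using hX.injOn_nonempty

theorem sup_own (X : Fin n → Finset ι) (i : Fin n) : (own X i).sup id = X i := by
  by_cases h : X i = ∅ <;> simp [own, h]

theorem sum_price_own (X : Fin n → Finset ι) (p : Finset ι → ℝ) (i : Fin n) :
    ∑ B ∈ own X i, p B = if X i ≠ ∅ then p (X i) else 0 := by
  by_cases h : X i = ∅ <;> simp [own, h]

theorem sum_util_own (v : Fin n → Finset ι → ℝ) (X : Fin n → Finset ι) (p : Finset ι → ℝ) :
    ∑ i, util (v i) p (own X i) = SW v X - Revenue X p := by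
  simp only [util, sup_own, sum_price_own, sum_sub_distrib, SW, Revenue, sum_filter]

theorem IsCWE.sum_price_le_revenue (h : IsCWE v X p) {Z : Fin n → Finset (Finset ι)}
    (hZsub : ∀ i, Z i ⊆ soldBundles X) (hZdisj : Pairwise (Function.onFun Disjoint Z)) :
    ∑ i, ∑ B ∈ Z i, p B ≤ Revenue X p := by
  obtain ⟨halloc, hprice, -⟩ := h
  rw [← halloc.sum_price_soldBundles]
  exact sum_sum_le_sum_of_pairwiseDisjoint
    (fun B hB => hprice B (soldBundles_subset_bundles X hB)) (fun i _ => hZsub i)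
    (hZdisj.set_pairwise _)

theorem IsCWE.sum_util_le (h : IsCWE v X p) {Z : Fin n → Finset (Finset ι)}
    (hZ : ∀ i, Z i ⊆ Bundles X) : ∑ i, util (v i) p (Z i) ≤ SW v X - Revenue X p := by
  rw [← sum_util_own]
  exact sum_le_sum fun i _ => h.2.2 i (Z i) (hZ i)

theorem cwe_efficient_over_sold_bundles_general (h : IsCWE v X p) {Z : Fin n → Finset (Finset ι)}
    (hZsub : ∀ i, Z i ⊆ soldBundles X) (hZdisj : Pairwise (Function.onFun Disjoint Z)) :
    ∑ i, v i ((Z i).sup id) ≤ SW v X :=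
  calc
    ∑ i, v i ((Z i).sup id) = ∑ i, util (v i) p (Z i) + ∑ i, ∑ B ∈ Z i, p B := by
      simp only [util, sum_sub_distrib, sub_add_cancel]
    _ ≤ (SW v X - Revenue X p) + Revenue X p :=
      add_le_add (h.sum_util_le fun i => (hZsub i).trans (soldBundles_subset_bundles X))
        (h.sum_price_le_revenue hZsub hZdisj)
    _ = SW v X := sub_add_cancel _ _

end

/-- a CWE allocates the sold bundles efficiently: for every assignment of
pairwise disjoint sets `Zᵢ` of allocated bundles (no allocated bundle used by two agents),
the welfare `∑ᵢ vᵢ(∪ Zᵢ)` is at most the welfare of the CWE allocation. -/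
theorem cwe_efficient_over_sold_bundles {ι : Type} [Fintype ι] [DecidableEq ι] (n : ℕ)
    (v : Fin n → Finset ι → ℝ) (hv : ∀ i, ValidVal (v i))
    (X : Fin n → Finset ι) (p : Finset ι → ℝ) (hcwe : IsCWE v X p)
    (Z : Fin n → Finset (Finset ι))
    (hZsub : ∀ i, Z i ⊆ (Finset.image X Finset.univ).erase ∅)
    (hZdisj : ∀ i j, i ≠ j → Disjoint (Z i) (Z j)) :
    ∑ i, v i ((Z i).sup id) ≤ ∑ i, v i (X i) :=
  cwe_efficient_over_sold_bundles_general hcwe hZsub hZdisj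
end
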